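/- arXiv:2507.01345 — 2 statements merged into one kernel-verified Lean document; each statement's English description precedes it below -/
import Mathlib

section
/- Let I₁, I₂ ⊆ ℝ be open intervals with base points s₁ ∈ I₁ and s₂ ∈ I₂, and let γ : I₁ → ℂ and ξ : I₂ → ℂ be continuously differentiable curves. Then for every (x,y) ∈ I₁ × I₂, the determinant of the complex 2×2 matrix whose columns are ∂F̌/∂x(x,y) and ∂F̌/∂y(x,y) equals γ'(x)·ξ'(y)·(|γ(x)|² + |ξ(y)|²). In particular, if γ'(x) ≠ 0, ξ'(y) ≠ 0 and (γ(x), ξ(y)) ≠ (0,0), this determinant is nonzero and its argument (the Lagrangian angle of F̌ at (x,y)) equals arg(γ'(x)) + arg(ξ'(y)) modulo 2π. -/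
open Complex Real

/-- The primitive `β_γ` of the pullback of the Liouville form by a curve `γ`
(with given derivative `γ'` and base point `s₀`). -/
noncomputable def beta (γ γ' : ℝ → ℂ) (s₀ s : ℝ) : ℝ :=
  ∫ t in s₀..s, ((starRingEnd ℂ) (γ t) * γ' t).im

/-- The Castro–Lerma profile surface `F̌ : I₁ × I₂ → ℂ²`. -/
noncomputable def Fcheck (γ ξ γ' ξ' : ℝ → ℂ) (s₁ s₂ : ℝ) (x y : ℝ) : ℂ × ℂ :=
  (γ x * ξ y,
    ((1/2 * (‖ξ y‖ ^ 2 - ‖γ x‖ ^ 2) : ℝ) : ℂ)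
      + Complex.I * ((beta ξ ξ' s₂ y - beta γ γ' s₁ x : ℝ) : ℂ))

/-!
Since `conj γ · γ'` has real part `(|γ|² / 2)'` and imaginary part `β_γ'`, it is the derivative of
the complex potential `Φ_γ = |γ|² / 2 + i β_γ`. The second component of `F̌` is `Φ_ξ(y) - Φ_γ(x)`,
so the partial derivatives of `F̌` are `γ' · (ξ, -conj γ)` and `ξ' · (γ, conj ξ)`. Their
determinant is `γ' ξ' (|γ|² + |ξ|²)`, whose last factor is a positive real number unless `γ` and
`ξ` both vanish, and so does not affect the argument.
-/

open scoped ComplexConjugate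

section General

theorem hasDerivAt_integral_of_continuousOn {E : Type*} [NormedAddCommGroup E] [NormedSpace ℝ E]
    [CompleteSpace E] {f : ℝ → E} {I : Set ℝ} (hI : IsOpen I) (hI' : I.OrdConnected)
    (hf : ContinuousOn f I) {a x : ℝ} (ha : a ∈ I) (hx : x ∈ I) :
    HasDerivAt (fun s => ∫ t in a..s, f t) (f x) x :=
  intervalIntegral.integral_hasDerivAt_right
    (hf.mono (hI'.uIcc_subset ha hx)).intervalIntegrable
    (hf.stronglyMeasurableAtFilter hI x hx)
    (hf.continuousAt (hI.mem_nhds hx))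

theorem norm_sq_add_norm_sq_pos {E F : Type*} [NormedAddCommGroup E] [NormedAddCommGroup F]
    {p : E × F} (hp : p ≠ 0) : 0 < ‖p.1‖ ^ 2 + ‖p.2‖ ^ 2 :=
  calc
    0 < ‖WithLp.toLp 2 p‖ ^ 2 := pow_pos (norm_pos_iff.mpr ((WithLp.toLp_eq_zero 2).not.mpr hp)) 2
    _ = ‖p.1‖ ^ 2 + ‖p.2‖ ^ 2 := WithLp.prod_norm_sq_eq_of_L2 _

theorem det_mul_conj {𝕜 : Type*} [RCLike 𝕜] (a b u v : 𝕜) :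
    Matrix.det !![u * b, a * v; -(conj a * u), conj b * v]
      = u * v * ((‖a‖ ^ 2 + ‖b‖ ^ 2 : ℝ) : 𝕜) := by
  rw [Matrix.det_fin_two_of]
  push_cast
  rw [← RCLike.conj_mul, ← RCLike.conj_mul]
  ring

theorem exists_arg_mul_eq_add {u v : ℂ} (hu : u ≠ 0) (hv : v ≠ 0) :
    ∃ k : ℤ, arg (u * v) = arg u + arg v + 2 * π * k := by
  have h_angle : (arg (u * v) : Real.Angle) = (arg u + arg v : ℝ) := by
    rw [arg_mul_coe_angle hu hv, Real.Angle.coe_add]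
  obtain ⟨k, hk⟩ := Real.Angle.angle_eq_iff_two_pi_dvd_sub.mp h_angle
  exact ⟨k, sub_eq_iff_eq_add'.mp hk⟩

end General

section Potential

variable {γ γ' : ℝ → ℂ} {s₀ x : ℝ}

/-- The complex potential `|γ|² / 2 + i β_γ` of a curve `γ` with derivative `γ'`: a primitive of
`conj γ · γ'`, normalized so that its imaginary part vanishes at the base point `s₀`. -/
noncomputable def liouvillePotential (γ γ' : ℝ → ℂ) (s₀ s : ℝ) : ℂ :=
  ((1 / 2 * ‖γ s‖ ^ 2 : ℝ) : ℂ) + (beta γ γ' s₀ s : ℂ) * I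

theorem hasDerivAt_beta {J : Set ℝ} (hJ : IsOpen J) (hJ' : J.OrdConnected)
    (hγ : ContinuousOn γ J) (hγ' : ContinuousOn γ' J) (hs₀ : s₀ ∈ J) (hx : x ∈ J) :
    HasDerivAt (beta γ γ' s₀) (conj (γ x) * γ' x).im x :=
  hasDerivAt_integral_of_continuousOn hJ hJ'
    (continuous_im.comp_continuousOn ((continuous_conj.comp_continuousOn hγ).mul hγ')) hs₀ hx

theorem hasDerivAt_half_norm_sq {c : ℂ} (hγ : HasDerivAt γ c x) :
    HasDerivAt (fun s => 1 / 2 * ‖γ s‖ ^ 2) (conj (γ x) * c).re x := by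
  have h_inner : (1 / 2 : ℝ) * (2 * inner ℝ (γ x) c) = (conj (γ x) * c).re := by
    rw [Complex.inner, mul_comm c]
    ring
  exact h_inner ▸ hγ.norm_sq.const_mul (1 / 2 : ℝ)

theorem hasDerivAt_liouvillePotential {c : ℂ} (hγ : HasDerivAt γ c x)
    (hβ : HasDerivAt (beta γ γ' s₀) (conj (γ x) * c).im x) :
    HasDerivAt (liouvillePotential γ γ' s₀) (conj (γ x) * c) x := by
  rw [← re_add_im (conj (γ x) * c)]
  exact (hasDerivAt_half_norm_sq hγ).ofReal_comp.add (hβ.ofReal_comp.mul_const I)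

theorem hasDerivAt_liouvillePotential_of_continuousOn {J : Set ℝ} (hJ : IsOpen J)
    (hJ' : J.OrdConnected) (hγ : ∀ s ∈ J, HasDerivAt γ (γ' s) s) (hγ' : ContinuousOn γ' J)
    (hs₀ : s₀ ∈ J) (hx : x ∈ J) :
    HasDerivAt (liouvillePotential γ γ' s₀) (conj (γ x) * γ' x) x :=
  hasDerivAt_liouvillePotential (hγ x hx)
    (hasDerivAt_beta hJ hJ' (HasDerivAt.continuousOn hγ) hγ' hs₀ hx)

end Potential

section Partials

variable {γ ξ γ' ξ' : ℝ → ℂ} {s₁ s₂ x y : ℝ}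

theorem Fcheck_eq_liouvillePotential_sub (γ ξ γ' ξ' : ℝ → ℂ) (s₁ s₂ x y : ℝ) :
    Fcheck γ ξ γ' ξ' s₁ s₂ x y
      = (γ x * ξ y, liouvillePotential ξ ξ' s₂ y - liouvillePotential γ γ' s₁ x) := by
  ext1
  · rfl
  · simp only [Fcheck, liouvillePotential]
    push_cast
    ring

theorem hasDerivAt_Fcheck_left {u w : ℂ} (hγ : HasDerivAt γ u x)
    (hΦ : HasDerivAt (liouvillePotential γ γ' s₁) w x) :
    HasDerivAt (fun x' => Fcheck γ ξ γ' ξ' s₁ s₂ x' y) (u * ξ y, -w) x := by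
  simp only [Fcheck_eq_liouvillePotential_sub]
  exact (hγ.mul_const (ξ y)).prodMk (hΦ.const_sub _)

theorem hasDerivAt_Fcheck_right {v w : ℂ} (hξ : HasDerivAt ξ v y)
    (hΦ : HasDerivAt (liouvillePotential ξ ξ' s₂) w y) :
    HasDerivAt (fun y' => Fcheck γ ξ γ' ξ' s₁ s₂ x y') (γ x * v, w) y := by
  simp only [Fcheck_eq_liouvillePotential_sub]
  exact (hξ.const_mul (γ x)).prodMk (hΦ.sub_const _)

end Partials

/-- The determinant of the complex `2×2` matrix whose columns are the
partial derivatives of `F̌` equals `γ'(x)·ξ'(y)·(|γ(x)|² + |ξ(y)|²)`; if `γ'(x) ≠ 0`,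
`ξ'(y) ≠ 0` and `(γ(x), ξ(y)) ≠ (0,0)` it is nonzero, and its argument (the Lagrangian
angle) equals `arg(γ'(x)) + arg(ξ'(y))` modulo `2π`. -/
theorem lagrangian_angle_ansatz
    (I₁ I₂ : Set ℝ) (hI₁o : IsOpen I₁) (hI₂o : IsOpen I₂)
    (hI₁c : I₁.OrdConnected) (hI₂c : I₂.OrdConnected)
    (s₁ s₂ : ℝ) (hs₁ : s₁ ∈ I₁) (hs₂ : s₂ ∈ I₂)
    (γ ξ γ' ξ' : ℝ → ℂ)
    (hγ : ∀ x ∈ I₁, HasDerivAt γ (γ' x) x)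
    (hξ : ∀ y ∈ I₂, HasDerivAt ξ (ξ' y) y)
    (hγ'c : ContinuousOn γ' I₁) (hξ'c : ContinuousOn ξ' I₂)
    (x y : ℝ) (hx : x ∈ I₁) (hy : y ∈ I₂)
    (Dx Dy : ℂ × ℂ)
    (hDx : HasDerivAt (fun x' => Fcheck γ ξ γ' ξ' s₁ s₂ x' y) Dx x)
    (hDy : HasDerivAt (fun y' => Fcheck γ ξ γ' ξ' s₁ s₂ x y') Dy y) :
    Matrix.det !![Dx.1, Dy.1; Dx.2, Dy.2]
        = γ' x * ξ' y * (((‖γ x‖ ^ 2 + ‖ξ y‖ ^ 2 : ℝ)) : ℂ) ∧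
    ((γ' x ≠ 0 ∧ ξ' y ≠ 0 ∧ (γ x, ξ y) ≠ ((0 : ℂ), (0 : ℂ))) →
      Matrix.det !![Dx.1, Dy.1; Dx.2, Dy.2] ≠ 0 ∧
      ∃ k : ℤ, Complex.arg (Matrix.det !![Dx.1, Dy.1; Dx.2, Dy.2])
          = Complex.arg (γ' x) + Complex.arg (ξ' y) + 2 * π * k) := by
  have hΦγ := hasDerivAt_liouvillePotential_of_continuousOn hI₁o hI₁c hγ hγ'c hs₁ hx
  have hΦξ := hasDerivAt_liouvillePotential_of_continuousOn hI₂o hI₂c hξ hξ'c hs₂ hy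
  obtain rfl := hDx.unique (hasDerivAt_Fcheck_left (hγ x hx) hΦγ)
  obtain rfl := hDy.unique (hasDerivAt_Fcheck_right (hξ y hy) hΦξ)
  have h_det : Matrix.det !![γ' x * ξ y, γ x * ξ' y; -(conj (γ x) * γ' x), conj (ξ y) * ξ' y]
      = γ' x * ξ' y * ((‖γ x‖ ^ 2 + ‖ξ y‖ ^ 2 : ℝ) : ℂ) :=
    det_mul_conj (γ x) (ξ y) (γ' x) (ξ' y)
  refine ⟨h_det, fun ⟨hγ'_ne, hξ'_ne, h_ne⟩ => ?_⟩
  have h_pos : 0 < ‖γ x‖ ^ 2 + ‖ξ y‖ ^ 2 := norm_sq_add_norm_sq_pos h_ne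
  rw [h_det, arg_mul_real h_pos]
  exact ⟨mul_ne_zero (mul_ne_zero hγ'_ne hξ'_ne) (ofReal_ne_zero.mpr h_pos.ne'),
    exists_arg_mul_eq_add hγ'_ne hξ'_ne⟩
end

section
/- Let m ≥ 2 and k ≥ 1 be integers with k ≤ m−1, let μ₁, μ₂ > 0 be reals, let l̃ be the Lawlor neck profile curve on I = (−π/(2(m−1)), π/(2(m−1))), and let β(s) := ∫₀^{s} |l̃(t)|² dt. Suppose (x₁, y₁), (x₂, y₂) ∈ I × I and j ∈ ℤ satisfy the three equations: (1) exp(2πij/k)·μ₁μ₂·l̃(x₁)·l̃(y₁) = μ₁μ₂·l̃(x₂)·l̃(y₂); (2) μ₂²|l̃(y₁)|² − μ₁²|l̃(x₁)|² = μ₂²|l̃(y₂)|² − μ₁²|l̃(x₂)|²; (3) μ₂²β(y₁) − μ₁²β(x₁) = μ₂²β(y₂) − μ₁²β(x₂). Then x₁ = x₂, y₁ = y₂, and exp(2πij/k) = 1. (Consequently the profile surface F̌_{(c)}(x,y) = (μ₁μ₂ l̃(x)l̃(y), (1/2)(μ₂²|l̃(y)|² − μ₁²|l̃(x)|²) + i(μ₂²β(y)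 − μ₁²β(x))) is injective and its orbit under the cyclic group C_k acting by (z₁, z₂) ↦ (e^{2πij/k}z₁, z₂) is embedded, which yields the embeddedness of the G-invariant special Lagrangian L_{(c)} whenever the associated cyclic group C_k has order k ≤ m−1.) -/
open Complex Real

/-- The Lawlor neck profile curve
`l̃(s) = (cos((m−1)s))^{−1/(m−1)}·e^{is}` on `(−π/(2(m−1)), π/(2(m−1)))`. -/
noncomputable def lawlor (m : ℕ) (s : ℝ) : ℂ :=
  ((Real.cos (((m : ℝ) - 1) * s) ^ (-(1 : ℝ) / ((m : ℝ) - 1)) : ℝ) : ℂ)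
    * Complex.exp ((s : ℂ) * Complex.I)

/-- `β(s) = ∫₀^s |l̃(t)|² dt`. -/
noncomputable def betaL (m : ℕ) (s : ℝ) : ℝ :=
  ∫ t in (0 : ℝ)..s, ‖lawlor m t‖ ^ 2

/-!
Put `r = ‖l̃‖`. The modulus of equation (1) fixes the product of `μ₁² r(x)²` and `μ₂² r(y)²`,
and (2) fixes their difference; as both are positive, each is determined, so `x` and `y` are
determined up to sign. By (3) and the injectivity of `β`, the signs agree as soon as one of them
does, which leaves only the possibility `(x₂, y₂) = (-x₁, -y₁)`. There `l̃(-s)` is the conjugate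
of `l̃(s)`, so (1) says that `w = l̃(x₁) l̃(y₁)` satisfies `ω w = conj w` with `ω ^ k = 1`;
hence `w ^ k` is real. Since `w` has argument `x₁ + y₁` and `k |x₁ + y₁| < kπ / (m - 1) ≤ π`,
this forces `y₁ = -x₁`. Then the two points are exchanged by swapping coordinates, and (3)
becomes `(μ₁² + μ₂²) (β(x₁) - β(y₁)) = 0`, so both points are the origin.
-/

open scoped ComplexConjugate

theorem eq_and_eq_of_mul_eq_mul_of_sub_eq_sub {R : Type*} [CommRing R] [NoZeroDivisors R]
    {a b c d : R} (had : a + d ≠ 0) (hmul : a * b = c * d) (hsub : b - a = d - c) :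
    a = c ∧ b = d := by
  have hfactor : (a - c) * (a + d) = 0 := by linear_combination hmul - a * hsub
  have hac : a = c := sub_eq_zero.1 ((mul_eq_zero.1 hfactor).resolve_right had)
  exact ⟨hac, by linear_combination hsub + hac⟩

theorem eq_and_eq_of_mul_eq_mul_of_weighted_sq_sub_eq {p q a b c d : ℝ} (hp : p ≠ 0) (hq : q ≠ 0)
    (ha : 0 < a) (hb : 0 ≤ b) (hc : 0 ≤ c) (hd : 0 ≤ d) (hmul : a * b = c * d)
    (hsub : q ^ 2 * b ^ 2 - p ^ 2 * a ^ 2 = q ^ 2 * d ^ 2 - p ^ 2 * c ^ 2) :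
    a = c ∧ b = d := by
  have hsq_mul : p ^ 2 * a ^ 2 * (q ^ 2 * b ^ 2) = p ^ 2 * c ^ 2 * (q ^ 2 * d ^ 2) := by
    linear_combination p ^ 2 * q ^ 2 * (a * b + c * d) * hmul
  obtain ⟨hac, hbd⟩ := eq_and_eq_of_mul_eq_mul_of_sub_eq_sub (by positivity) hsq_mul hsub
  exact ⟨(sq_eq_sq₀ ha.le hc).1 (mul_left_cancel₀ (pow_ne_zero 2 hp) hac),
    (sq_eq_sq₀ hb hd).1 (mul_left_cancel₀ (pow_ne_zero 2 hq) hbd)⟩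

theorem strictMonoOn_intervalIntegral_of_pos {f : ℝ → ℝ} {s : Set ℝ} {c : ℝ} [s.OrdConnected]
    (hf : MeasureTheory.LocallyIntegrableOn f s) (hpos : ∀ t ∈ s, 0 < f t) (hc : c ∈ s) :
    StrictMonoOn (fun x ↦ ∫ t in c..x, f t) s := by
  have hint {a b : ℝ} (ha : a ∈ s) (hb : b ∈ s) :
      IntervalIntegrable f MeasureTheory.volume a b :=
    (hf.integrableOn_compact_subset
      (Set.OrdConnected.uIcc_subset inferInstance ha hb) isCompact_uIcc).intervalIntegrable
  intro a ha b hb hab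
  have hgap : 0 < ∫ t in a..b, f t :=
    intervalIntegral.intervalIntegral_pos_of_pos_on (hint ha hb)
      (fun t ht ↦ hpos t (Set.Icc_subset s ha hb (Set.Ioo_subset_Icc_self ht))) hab
  rw [← intervalIntegral.integral_interval_sub_left (hint hc hb) (hint hc ha)] at hgap
  exact sub_pos.1 hgap

theorem im_pow_eq_zero_of_mul_eq_conj {ω z : ℂ} {k : ℕ} (hω : ω ^ k = 1) (h : ω * z = conj z) :
    (z ^ k).im = 0 := by
  rw [← Complex.conj_eq_iff_im, map_pow, ← h, mul_pow, hω, one_mul]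

theorem eq_zero_of_im_polar_pow_eq_zero {r θ : ℝ} {k : ℕ} (hk : k ≠ 0) (hr : r ≠ 0)
    (hθ : |k * θ| < π) (h : (((r : ℂ) * Complex.exp (θ * I)) ^ k).im = 0) : θ = 0 := by
  have hpow : ((r : ℂ) * Complex.exp (θ * I)) ^ k
      = (r ^ k : ℝ) * Complex.exp ((k * θ : ℝ) * I) := by
    rw [mul_pow, ← Complex.exp_nat_mul]
    push_cast
    ring_nf
  rw [hpow, Complex.im_ofReal_mul, Complex.exp_ofReal_mul_I_im] at h
  have hsin : Real.sin (k * θ) = 0 := (mul_eq_zero.1 h).resolve_left (pow_ne_zero k hr)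
  have hkθ := (Real.sin_eq_zero_iff_of_lt_of_lt (abs_lt.1 hθ).1 (abs_lt.1 hθ).2).1 hsin
  exact (mul_eq_zero.1 hkθ).resolve_left (Nat.cast_ne_zero.2 hk)

theorem exp_two_pi_mul_int_div_pow_eq_one {k : ℕ} (hk : k ≠ 0) (j : ℤ) :
    Complex.exp ((2 * π * j / k : ℝ) * I) ^ k = 1 := by
  rw [← Complex.exp_nat_mul, ← Complex.exp_int_mul_two_pi_mul_I j]
  congr 1
  push_cast
  field_simp

/-- The parameter interval `I = (-π/(2(m-1)), π/(2(m-1)))` of the Lawlor neck profile curve; it is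
empty for `m ≤ 1`. -/
def neckInterval (m : ℕ) : Set ℝ :=
  Set.Ioo (-(π / (2 * ((m : ℝ) - 1)))) (π / (2 * ((m : ℝ) - 1)))

section Neck

variable {m k : ℕ} {x y x₁ y₁ x₂ y₂ μ₁ μ₂ : ℝ} {ω : ℂ}

theorem sub_one_pos_of_mem_neckInterval (hx : x ∈ neckInterval m) : 0 < (m : ℝ) - 1 := by
  by_contra! hm
  have hnonpos : π / (2 * ((m : ℝ) - 1)) ≤ 0 :=
    div_nonpos_of_nonneg_of_nonpos Real.pi_pos.le (by linarith)
  linarith [hx.1, hx.2]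

theorem zero_mem_neckInterval_of_mem (hx : x ∈ neckInterval m) : 0 ∈ neckInterval m := by
  have hm := sub_one_pos_of_mem_neckInterval hx
  have hend : 0 < π / (2 * ((m : ℝ) - 1)) := by positivity
  exact ⟨neg_lt_zero.2 hend, hend⟩

theorem abs_sub_one_mul_lt_of_mem_neckInterval (hx : x ∈ neckInterval m) :
    |((m : ℝ) - 1) * x| < π / 2 := by
  have hm := sub_one_pos_of_mem_neckInterval hx
  have hlt : |x| < π / 2 / ((m : ℝ) - 1) := by rw [div_div]; exact abs_lt.2 hx
  rwa [abs_mul, abs_of_pos hm, ← lt_div_iff₀' hm]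

theorem cos_pos_of_mem_neckInterval (hx : x ∈ neckInterval m) :
    0 < Real.cos (((m : ℝ) - 1) * x) :=
  Real.cos_pos_of_mem_Ioo (abs_lt.1 (abs_sub_one_mul_lt_of_mem_neckInterval hx))

theorem lawlor_neg (m : ℕ) (s : ℝ) : lawlor m (-s) = conj (lawlor m s) := by
  simp [lawlor, ← Complex.exp_conj]

theorem norm_lawlor (hx : x ∈ neckInterval m) :
    ‖lawlor m x‖ = Real.cos (((m : ℝ) - 1) * x) ^ (-(1 : ℝ) / ((m : ℝ) - 1)) := by
  rw [lawlor, norm_mul, Complex.norm_exp_ofReal_mul_I, mul_one,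
    Complex.norm_of_nonneg (Real.rpow_nonneg (cos_pos_of_mem_neckInterval hx).le _)]

theorem norm_lawlor_pos (hx : x ∈ neckInterval m) : 0 < ‖lawlor m x‖ := by
  rw [norm_lawlor hx]
  exact Real.rpow_pos_of_pos (cos_pos_of_mem_neckInterval hx) _

theorem lawlor_ne_zero (hx : x ∈ neckInterval m) : lawlor m x ≠ 0 :=
  norm_pos_iff.1 (norm_lawlor_pos hx)

theorem lawlor_eq_norm_mul_exp (hx : x ∈ neckInterval m) :
    lawlor m x = ‖lawlor m x‖ * Complex.exp (x * I) := by
  rw [norm_lawlor hx, lawlor]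

theorem lawlor_mul_lawlor (hx : x ∈ neckInterval m) (hy : y ∈ neckInterval m) :
    lawlor m x * lawlor m y
      = (‖lawlor m x‖ * ‖lawlor m y‖ : ℝ) * Complex.exp ((x + y : ℝ) * I) := by
  conv_lhs => rw [lawlor_eq_norm_mul_exp hx, lawlor_eq_norm_mul_exp hy]
  rw [mul_mul_mul_comm, ← Complex.exp_add, ← add_mul]
  push_cast
  rfl

theorem abs_eq_abs_of_norm_lawlor_eq (hx : x ∈ neckInterval m) (hy : y ∈ neckInterval m)
    (h : ‖lawlor m x‖ = ‖lawlor m y‖) : |x| = |y| := by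
  have hm := sub_one_pos_of_mem_neckInterval hx
  have hmem {s : ℝ} (hs : s ∈ neckInterval m) : |((m : ℝ) - 1) * s| ∈ Set.Icc 0 π :=
    ⟨abs_nonneg _, by linarith [abs_sub_one_mul_lt_of_mem_neckInterval hs, Real.pi_pos]⟩
  rw [norm_lawlor hx, norm_lawlor hy, Real.rpow_left_inj (cos_pos_of_mem_neckInterval hx).le
    (cos_pos_of_mem_neckInterval hy).le (div_ne_zero (by norm_num) hm.ne'),
    ← Real.cos_abs, ← Real.cos_abs (_ * y)] at h
  have habs := Real.injOn_cos (hmem hx) (hmem hy) h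
  rw [abs_mul, abs_mul] at habs
  exact mul_left_cancel₀ (abs_pos.2 hm.ne').ne' habs

theorem continuousOn_norm_lawlor (m : ℕ) :
    ContinuousOn (fun s ↦ ‖lawlor m s‖) (neckInterval m) := by
  refine ContinuousOn.congr (ContinuousOn.rpow_const ?_ ?_) fun _ ↦ norm_lawlor
  · fun_prop
  · exact fun s hs ↦ Or.inl (cos_pos_of_mem_neckInterval hs).ne'

theorem strictMonoOn_betaL (m : ℕ) : StrictMonoOn (betaL m) (neckInterval m) := by
  intro x hx y hy hxy
  have : (neckInterval m).OrdConnected := Set.ordConnected_Ioo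
  exact strictMonoOn_intervalIntegral_of_pos
    (((continuousOn_norm_lawlor m).pow 2).locallyIntegrableOn measurableSet_Ioo)
    (fun t ht ↦ pow_pos (norm_lawlor_pos ht) 2) (zero_mem_neckInterval_of_mem hx) hx hy hxy

theorem abs_eq_abs_of_mul_lawlor_eq (hμ₁ : μ₁ ≠ 0) (hμ₂ : μ₂ ≠ 0) (hω : ‖ω‖ = 1)
    (hx₁ : x₁ ∈ neckInterval m) (hy₁ : y₁ ∈ neckInterval m)
    (hx₂ : x₂ ∈ neckInterval m) (hy₂ : y₂ ∈ neckInterval m)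
    (h : ω * (lawlor m x₁ * lawlor m y₁) = lawlor m x₂ * lawlor m y₂)
    (hnorm : μ₂ ^ 2 * ‖lawlor m y₁‖ ^ 2 - μ₁ ^ 2 * ‖lawlor m x₁‖ ^ 2
      = μ₂ ^ 2 * ‖lawlor m y₂‖ ^ 2 - μ₁ ^ 2 * ‖lawlor m x₂‖ ^ 2) :
    |x₁| = |x₂| ∧ |y₁| = |y₂| := by
  have hmul : ‖lawlor m x₁‖ * ‖lawlor m y₁‖ = ‖lawlor m x₂‖ * ‖lawlor m y₂‖ := by
    simpa only [norm_mul, hω, one_mul] using congrArg norm h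
  obtain ⟨hx, hy⟩ := eq_and_eq_of_mul_eq_mul_of_weighted_sq_sub_eq hμ₁ hμ₂
    (norm_lawlor_pos hx₁) (norm_nonneg _) (norm_nonneg _) (norm_nonneg _) hmul hnorm
  exact ⟨abs_eq_abs_of_norm_lawlor_eq hx₁ hx₂ hx, abs_eq_abs_of_norm_lawlor_eq hy₁ hy₂ hy⟩

theorem eq_iff_eq_of_betaL (hμ₁ : μ₁ ≠ 0) (hμ₂ : μ₂ ≠ 0)
    (hx₁ : x₁ ∈ neckInterval m) (hy₁ : y₁ ∈ neckInterval m)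
    (hx₂ : x₂ ∈ neckInterval m) (hy₂ : y₂ ∈ neckInterval m)
    (h : μ₂ ^ 2 * betaL m y₁ - μ₁ ^ 2 * betaL m x₁
      = μ₂ ^ 2 * betaL m y₂ - μ₁ ^ 2 * betaL m x₂) :
    x₁ = x₂ ↔ y₁ = y₂ := by
  rw [← (strictMonoOn_betaL m).injOn.eq_iff hx₁ hx₂, ← (strictMonoOn_betaL m).injOn.eq_iff hy₁ hy₂,
    ← mul_right_inj' (pow_ne_zero 2 hμ₁),
    ← mul_right_inj' (b := betaL m y₁) (pow_ne_zero 2 hμ₂)]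
  constructor <;> intro h' <;> linarith

theorem eq_of_betaL_swap (hμ₁ : μ₁ ≠ 0) (hx : x ∈ neckInterval m) (hy : y ∈ neckInterval m)
    (h : μ₂ ^ 2 * betaL m y - μ₁ ^ 2 * betaL m x = μ₂ ^ 2 * betaL m x - μ₁ ^ 2 * betaL m y) :
    x = y := by
  have hfactor : (μ₁ ^ 2 + μ₂ ^ 2) * betaL m x = (μ₁ ^ 2 + μ₂ ^ 2) * betaL m y := by
    linear_combination -h
  exact (strictMonoOn_betaL m).injOn hx hy (mul_left_cancel₀ (by positivity) hfactor)

theorem add_eq_zero_of_mul_lawlor_eq_conj (hk : k ≠ 0) (hkm : k < m) (hω : ω ^ k = 1)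
    (hx : x ∈ neckInterval m) (hy : y ∈ neckInterval m)
    (h : ω * (lawlor m x * lawlor m y) = conj (lawlor m x * lawlor m y)) : x + y = 0 := by
  have hkm' : (k : ℝ) ≤ (m : ℝ) - 1 := by
    rw [le_sub_iff_add_le]
    exact_mod_cast hkm
  have hangle : |k * (x + y)| < π := calc
    |k * (x + y)| ≤ |((m : ℝ) - 1) * (x + y)| := by
      rw [abs_mul, abs_mul]
      gcongr
    _ ≤ |((m : ℝ) - 1) * x| + |((m : ℝ) - 1) * y| := by
      rw [mul_add]
      exact abs_add_le _ _
    _ < π / 2 + π / 2 := add_lt_add (abs_sub_one_mul_lt_of_mem_neckInterval hx)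
      (abs_sub_one_mul_lt_of_mem_neckInterval hy)
    _ = π := add_halves π
  have him := im_pow_eq_zero_of_mul_eq_conj hω h
  rw [lawlor_mul_lawlor hx hy] at him
  exact eq_zero_of_im_polar_pow_eq_zero hk
    (mul_pos (norm_lawlor_pos hx) (norm_lawlor_pos hy)).ne' hangle him

theorem eq_and_eq_of_lawlor_betaL_eq (hk : k ≠ 0) (hkm : k < m) (hμ₁ : μ₁ ≠ 0) (hμ₂ : μ₂ ≠ 0)
    (hω : ω ^ k = 1) (hx₁ : x₁ ∈ neckInterval m) (hy₁ : y₁ ∈ neckInterval m)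
    (hx₂ : x₂ ∈ neckInterval m) (hy₂ : y₂ ∈ neckInterval m)
    (hprod : ω * (lawlor m x₁ * lawlor m y₁) = lawlor m x₂ * lawlor m y₂)
    (hnorm : μ₂ ^ 2 * ‖lawlor m y₁‖ ^ 2 - μ₁ ^ 2 * ‖lawlor m x₁‖ ^ 2
      = μ₂ ^ 2 * ‖lawlor m y₂‖ ^ 2 - μ₁ ^ 2 * ‖lawlor m x₂‖ ^ 2)
    (hβ : μ₂ ^ 2 * betaL m y₁ - μ₁ ^ 2 * betaL m x₁
      = μ₂ ^ 2 * betaL m y₂ - μ₁ ^ 2 * betaL m x₂) :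
    x₁ = x₂ ∧ y₁ = y₂ := by
  have hxy : x₁ = x₂ ↔ y₁ = y₂ := eq_iff_eq_of_betaL hμ₁ hμ₂ hx₁ hy₁ hx₂ hy₂ hβ
  obtain ⟨hx, hy⟩ := abs_eq_abs_of_mul_lawlor_eq hμ₁ hμ₂ (Complex.norm_eq_one_of_pow_eq_one hω hk)
    hx₁ hy₁ hx₂ hy₂ hprod hnorm
  rcases abs_eq_abs.1 hx with hx | hx
  · exact ⟨hx, hxy.1 hx⟩
  rcases abs_eq_abs.1 hy with hy | hy
  · exact ⟨hxy.2 hy, hy⟩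
  obtain rfl : x₂ = -x₁ := by rw [hx, neg_neg]
  obtain rfl : y₂ = -y₁ := by rw [hy, neg_neg]
  rw [lawlor_neg, lawlor_neg, ← map_mul] at hprod
  have hsum : x₁ + y₁ = 0 := add_eq_zero_of_mul_lawlor_eq_conj hk hkm hω hx₁ hy₁ hprod
  obtain rfl : y₁ = -x₁ := eq_neg_of_add_eq_zero_right hsum
  rw [neg_neg] at hβ
  have hzero : x₁ = -x₁ := eq_of_betaL_swap hμ₁ hx₁ hy₁ hβ
  exact ⟨hzero, hxy.1 hzero⟩

end Neck

/-- Injectivity of the `C_k`-orbit of the profile surface `F̌_{(c)}`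
built from two Lawlor neck profiles: if `k ≤ m−1` and the three equations hold for
points of `I × I` and a `k`-th root of unity `e^{2πij/k}`, then the points agree and
the root of unity is `1`. This yields the embeddedness of the `G`-invariant special
Lagrangian `L_{(c)}` whenever the cyclic group `C_k` has order `k ≤ m−1`. -/
theorem Fc_orbit_injective
    (m k : ℕ) (hm : 2 ≤ m) (hk : 1 ≤ k) (hkm : k ≤ m - 1)
    (μ₁ μ₂ : ℝ) (hμ₁ : 0 < μ₁) (hμ₂ : 0 < μ₂)
    (x₁ y₁ x₂ y₂ : ℝ) (j : ℤ)
    (hx₁ : x₁ ∈ Set.Ioo (-(π / (2 * ((m : ℝ) - 1)))) (π / (2 * ((m : ℝ) - 1))))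
    (hy₁ : y₁ ∈ Set.Ioo (-(π / (2 * ((m : ℝ) - 1)))) (π / (2 * ((m : ℝ) - 1))))
    (hx₂ : x₂ ∈ Set.Ioo (-(π / (2 * ((m : ℝ) - 1)))) (π / (2 * ((m : ℝ) - 1))))
    (hy₂ : y₂ ∈ Set.Ioo (-(π / (2 * ((m : ℝ) - 1)))) (π / (2 * ((m : ℝ) - 1))))
    (h1 : Complex.exp (((2 * π * (j : ℝ) / (k : ℝ) : ℝ) : ℂ) * Complex.I)
        * (((μ₁ * μ₂ : ℝ)) : ℂ) * lawlor m x₁ * lawlor m y₁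
        = (((μ₁ * μ₂ : ℝ)) : ℂ) * lawlor m x₂ * lawlor m y₂)
    (h2 : μ₂ ^ 2 * ‖lawlor m y₁‖ ^ 2 - μ₁ ^ 2 * ‖lawlor m x₁‖ ^ 2
        = μ₂ ^ 2 * ‖lawlor m y₂‖ ^ 2 - μ₁ ^ 2 * ‖lawlor m x₂‖ ^ 2)
    (h3 : μ₂ ^ 2 * betaL m y₁ - μ₁ ^ 2 * betaL m x₁
        = μ₂ ^ 2 * betaL m y₂ - μ₁ ^ 2 * betaL m x₂) :
    x₁ = x₂ ∧ y₁ = y₂ ∧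
      Complex.exp (((2 * π * (j : ℝ) / (k : ℝ) : ℝ) : ℂ) * Complex.I) = 1 := by
  have hk₀ : k ≠ 0 := Nat.one_le_iff_ne_zero.1 hk
  set ω := Complex.exp (((2 * π * (j : ℝ) / (k : ℝ) : ℝ) : ℂ) * Complex.I)
  have hω : ω ^ k = 1 := exp_two_pi_mul_int_div_pow_eq_one hk₀ j
  have hprod : ω * (lawlor m x₁ * lawlor m y₁) = lawlor m x₂ * lawlor m y₂ := by
    apply mul_left_cancel₀ (Complex.ofReal_ne_zero.2 (mul_pos hμ₁ hμ₂).ne')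
    linear_combination h1
  obtain ⟨rfl, rfl⟩ := eq_and_eq_of_lawlor_betaL_eq hk₀ (by omega) hμ₁.ne' hμ₂.ne' hω
    hx₁ hy₁ hx₂ hy₂ hprod h2 h3
  exact ⟨rfl, rfl,
    (mul_eq_right₀ (mul_ne_zero (lawlor_ne_zero hx₁) (lawlor_ne_zero hy₁))).1 hprod⟩
end
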